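/- For every deterministic online strip-packing algorithm for L-shapes and every integer n ≥ 2, there exists a sequence of n pairwise distinct L-shapes from the family 𝓛^n that can be packed offline with pairwise disjoint interiors into the unit square [0,1]² (so the optimal strip width is at most 1), yet the width of the strip packing produced by the algorithm on this sequence is at least (n/log₂(n+1) − 2)/2. Consequently, the asymptotic competitive ratio of every online algorithm for strip packing of L-shapes is Ω(n/log n). -/

import Mathlib

/-!
All items of `𝓛^n` have vertical arms of width `w = 1/(2n)` and horizontal arms longer than `1/2`.

*Geometry of the strip* (`placement_separated`).  Cut the strip into blocks `[m/2, (m+1)/2)`.  In the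
strip every item sits so low that its vertical arm cannot pass below the horizontal arm of another
item, and two vertical arms cannot lie above one another.  Hence two items with reference points in
the same block are at horizontal distance at least `w`, and the one of larger index is to the left.

*Adversary* (`exists_adversarial_sequence`).  Within a block the algorithm therefore has to sort its
items by index.  The adversary keeps an open interval of indices from which all future items come.
When an item is put into a block, it splits the `x`-interval still available there; the adversary
restricts to the larger or to the smaller indices so that the smaller part remains.  The available
length (plus `2w`) of that block is at least halved and no other block gains anything, so a block
receives `k` items only if `2^k ≤ n + 2`.  Thus a packing of width `W`, which touches at most `2W`
blocks, satisfies `n ≤ 2W log₂(n+2)`, and this is slightly stronger than the claim.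

*Offline packing* (`offline_packing`).  Any `n` distinct items can be nested into the unit square, from
left to right by decreasing index, since `∑_{k > a} 2^(-k-1) ≤ 2^(-a-1)`.
-/

/-- An L-shape, given by its four parameters: arm lengths `lx, ly` and widths `wx, wy`. -/
structure LShape where
  lx : ℝ
  wx : ℝ
  ly : ℝ
  wy : ℝ

/-- The parameter constraints of an L-shape: `0 ≤ wx ≤ lx ≤ 1` and `0 ≤ wy ≤ ly ≤ 1`. -/
def LShape.IsValid (L : LShape) : Prop :=
  0 ≤ L.wx ∧ L.wx ≤ L.lx ∧ L.lx ≤ 1 ∧ 0 ≤ L.wy ∧ L.wy ≤ L.ly ∧ L.ly ≤ 1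

/-- The point set `([0,lx]×[0,wy]) ∪ ([0,wx]×[0,ly])` of an L-shape (reference point at the
origin). -/
def LShape.toSet (L : LShape) : Set (ℝ × ℝ) :=
  Set.Icc ((0, 0) : ℝ × ℝ) (L.lx, L.wy) ∪ Set.Icc ((0, 0) : ℝ × ℝ) (L.wx, L.ly)

/-- Translate a set in the plane by a vector. -/
def planeTranslate (v : ℝ × ℝ) (S : Set (ℝ × ℝ)) : Set (ℝ × ℝ) := (· + v) '' S

/-- The unit bin `[0,1]²`. -/
def unitBin : Set (ℝ × ℝ) := Set.Icc ((0, 0) : ℝ × ℝ) (1, 1)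

/-- The family `𝓛^k`: the L-shape `L_i` has `ℓx = 1/2 + 1/(2k)`, `wx = 1/(2k)`,
`ℓy = 1 − 2^(−i−1)`, `wy = 2^(−i−1)`. -/
noncomputable def Lfam (k i : ℕ) : LShape :=
  ⟨1 / 2 + 1 / (2 * k), 1 / (2 * k), 1 - 1 / 2 ^ (i + 1), 1 / 2 ^ (i + 1)⟩

/-- The half-strip `[0,∞) × [0,1]`. -/
def strip : Set (ℝ × ℝ) := {p : ℝ × ℝ | 0 ≤ p.1 ∧ p.2 ∈ Set.Icc (0 : ℝ) 1}

/-- The translation chosen by the online strip-packing algorithm `A` for the `i`-th item of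
`l` (depending only on the first `i+1` items). -/
def stripPlaceOf (A : List LShape → ℝ × ℝ) (l : List LShape) (i : Fin l.length) : ℝ × ℝ :=
  A (l.take (i.1 + 1))

/-- The placements produced by `A` on `l` lie in the strip and have pairwise disjoint
interiors. -/
def OnlineStripPacks (A : List LShape → ℝ × ℝ) (l : List LShape) : Prop :=
  (∀ i : Fin l.length, planeTranslate (stripPlaceOf A l i) (l.get i).toSet ⊆ strip) ∧
  ∀ i j : Fin l.length, i ≠ j →
    Disjoint (interior (planeTranslate (stripPlaceOf A l i) (l.get i).toSet))
             (interior (planeTranslate (stripPlaceOf A l j) (l.get j).toSet))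

/-! ### The adversary -/

/-- The number of the first `t` positions that lie in the block `[m/2, (m+1)/2)`. -/
noncomputable def blockCount (x : ℕ → ℝ) (t : ℕ) (m : ℤ) : ℕ :=
  ((Finset.range t).filter fun i => ⌊2 * x i⌋ = m).card

lemma blockCount_congr {x y : ℕ → ℝ} {t : ℕ} (h : ∀ i < t, x i = y i) (m : ℤ) :
    blockCount x t m = blockCount y t m := by
  unfold blockCount
  congr 1
  apply Finset.filter_congr
  intro i hi
  rw [h i (Finset.mem_range.1 hi)]

lemma blockCount_succ_self (x : ℕ → ℝ) (t : ℕ) :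
    blockCount x (t + 1) ⌊2 * x t⌋ = blockCount x t ⌊2 * x t⌋ + 1 := by
  unfold blockCount
  rw [Finset.range_add_one, Finset.filter_insert, if_pos rfl, Finset.card_insert_of_notMem]
  simp

lemma blockCount_succ_of_ne (x : ℕ → ℝ) (t : ℕ) {m : ℤ} (h : m ≠ ⌊2 * x t⌋) :
    blockCount x (t + 1) m = blockCount x t m := by
  unfold blockCount
  rw [Finset.range_add_one, Finset.filter_insert, if_neg (fun h' => h h'.symm)]

/-- The adversary's invariant after `t` of `n` items, with item indices `f` and positions `x`.
Future indices come from the open interval `(lo, hi)`, and `[p m, q m]` contains every position of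
block `m` at which an item of such an index can still be placed. -/
structure AdversaryState (n : ℕ) (w : ℝ) (t : ℕ) (f : ℕ → ℕ) (x : ℕ → ℝ) (lo hi : ℕ)
    (p q : ℤ → ℝ) : Prop where
  room : lo + 2 ^ (n - t) ≤ hi
  pos : ∀ i < t, 1 ≤ f i
  inj : ∀ i < t, ∀ j < t, f i = f j → i = j
  outside : ∀ i < t, f i ≤ lo ∨ hi ≤ f i
  size : ∀ m, (q m - p m + 2 * w) * 2 ^ blockCount x t m ≤ (n + 2) * w
  count : ∀ m, 2 ^ blockCount x t m ≤ n + 2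
  confined : ∀ y, (∀ i < t, ⌊2 * x i⌋ = ⌊2 * y⌋ →
    (hi ≤ f i → x i + w ≤ y) ∧ (f i ≤ lo → y + w ≤ x i)) → p ⌊2 * y⌋ ≤ y ∧ y ≤ q ⌊2 * y⌋

/-- An adversary against `X`, where `X f i` is the position given to the `i`-th item of the index
sequence `f`: if positions are chosen online and items in a common block are sorted decreasingly by
index with gaps of at least `1/(2n)`, then some sequence puts only few items into each block. -/
lemma exists_adversarial_sequence (n : ℕ) (hn : 1 ≤ n) (w : ℝ) (hw : w = 1 / (2 * n))
    (X : (ℕ → ℕ) → ℕ → ℝ)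
    (hX : ∀ f g i, (∀ j ≤ i, f j = g j) → X f i = X g i)
    (hsep : ∀ f i j, f j < f i → ⌊2 * X f i⌋ = ⌊2 * X f j⌋ → X f i + w ≤ X f j) :
    ∃ f : ℕ → ℕ, (∀ i < n, 1 ≤ f i) ∧ (∀ i < n, ∀ j < n, f i = f j → i = j) ∧
      ∀ m, 2 ^ blockCount (X f) n m ≤ n + 2 := by
  have hn0 : (0 : ℝ) < n := by exact_mod_cast hn
  have hw0 : 0 < w := by rw [hw]; positivity
  have hnw : n * w = 1 / 2 := by rw [hw]; field_simp
  have main : ∀ t ≤ n, ∃ f lo hi p q, AdversaryState n w t f (X f) lo hi p q := by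
    intro t
    induction t with
    | zero =>
      intro _
      refine ⟨fun _ => 0, 0, 2 ^ n, fun m => m / 2, fun m => (m + 1) / 2, ?_⟩
      constructor
      · simp
      · simp
      · simp
      · simp
      · intro m
        simp only [blockCount, Finset.range_zero, Finset.filter_empty, Finset.card_empty, pow_zero]
        linarith
      · intro m
        simp [blockCount]
      · intro y _
        have h1 := Int.floor_le (2 * y)
        have h2 := Int.lt_floor_add_one (2 * y)
        constructor <;> linarith
    | succ t ih =>
      intro ht
      obtain ⟨f, lo, hi, p, q, S⟩ := ih (by omega)
      obtain ⟨c, hc⟩ : ∃ c, c = lo + 2 ^ (n - (t + 1)) := ⟨_, rfl⟩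
      obtain ⟨g, hg⟩ : ∃ g, g = Function.update f t c := ⟨_, rfl⟩
      have hgt : g t = c := by rw [hg]; simp
      have hgf : ∀ i < t, g i = f i := fun i hi => by
        rw [hg, Function.update_of_ne (by omega)]
      have hXg : ∀ i < t, X g i = X f i := fun i hi =>
        hX _ _ _ fun j hj => hgf j (by omega)
      have hpow : 2 ^ (n - t) = 2 ^ (n - (t + 1)) + 2 ^ (n - (t + 1)) := by
        rw [show n - t = n - (t + 1) + 1 by omega, pow_succ]; ring
      have hpos : 1 ≤ 2 ^ (n - (t + 1)) := Nat.one_le_two_pow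
      have hroom := S.room
      have hloc : lo < c := by omega
      have hchi : c + 2 ^ (n - (t + 1)) ≤ hi := by omega
      obtain ⟨x, hx⟩ : ∃ x, x = X g t := ⟨_, rfl⟩
      have hpq : p ⌊2 * x⌋ ≤ x ∧ x ≤ q ⌊2 * x⌋ := by
        apply S.confined
        intro i hi' hm
        rw [← hXg i hi', hx] at hm
        rw [← hXg i hi', ← hgf i hi', hx]
        exact ⟨fun h => hsep g i t (by omega) hm, fun h => hsep g t i (by omega) hm.symm⟩
      have hpos' : ∀ i < t + 1, 1 ≤ g i := by
        intro i hi'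
        rcases Nat.lt_succ_iff_lt_or_eq.1 hi' with h | rfl
        · rw [hgf i h]; exact S.pos i h
        · omega
      have hgne : ∀ i < t, g i ≠ c := by
        intro i hi' h
        rw [hgf i hi'] at h
        rcases S.outside i hi' with h' | h' <;> omega
      have hinj : ∀ i < t + 1, ∀ j < t + 1, g i = g j → i = j := by
        intro i hi' j hj' h
        rcases Nat.lt_succ_iff_lt_or_eq.1 hi' with h1 | rfl <;>
          rcases Nat.lt_succ_iff_lt_or_eq.1 hj' with h2 | rfl
        · rw [hgf i h1, hgf j h2] at h
          exact S.inj i h1 j h2 h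
        · exact absurd (h.trans hgt) (hgne i h1)
        · exact absurd (h.symm.trans hgt) (hgne j h2)
        · rfl
      have hcself : blockCount (X g) (t + 1) ⌊2 * x⌋ = blockCount (X f) t ⌊2 * x⌋ + 1 := by
        rw [hx, blockCount_succ_self, blockCount_congr hXg]
      have hcne : ∀ m ≠ ⌊2 * x⌋, blockCount (X g) (t + 1) m = blockCount (X f) t m := by
        intro m hm
        rw [blockCount_succ_of_ne _ _ (by rwa [← hx]), blockCount_congr hXg]
      have hcount : ∀ m, 2 ^ blockCount (X g) (t + 1) m ≤ n + 2 := by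
        intro m
        by_cases hm : m = ⌊2 * x⌋
        · rw [hm, hcself]
          -- The available interval contains `x`, so its length plus `2w` is at least `2w`.
          have h1 := S.size ⌊2 * x⌋
          have h2 : (2 * w) * 2 ^ blockCount (X f) t ⌊2 * x⌋ ≤ (n + 2) * w := by
            refine le_trans ?_ h1
            gcongr
            linarith [hpq.1, hpq.2]
          have h3 : (2 : ℝ) ^ (blockCount (X f) t ⌊2 * x⌋ + 1) ≤ n + 2 := by
            rw [pow_succ]
            refine le_of_mul_le_mul_right ?_ hw0
            linarith
          exact_mod_cast h3
        · rw [hcne m hm]; exact S.count m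
      by_cases hhalf : 2 * x ≤ p ⌊2 * x⌋ + q ⌊2 * x⌋
      -- The left part is the smaller one: continue with indices larger than `c`.
      · refine ⟨g, c, hi, p, Function.update q ⌊2 * x⌋ (x - w), by omega, hpos', hinj, ?_, ?_,
          hcount, ?_⟩
        · intro i hi'
          rcases Nat.lt_succ_iff_lt_or_eq.1 hi' with h | rfl
          · rw [hgf i h]
            rcases S.outside i h with h' | h' <;> omega
          · omega
        · intro m
          by_cases hm : m = ⌊2 * x⌋
          · rw [hm, hcself, Function.update_self, pow_succ]
            refine le_trans ?_ (S.size ⌊2 * x⌋)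
            have : (0 : ℝ) < 2 ^ blockCount (X f) t ⌊2 * x⌋ := by positivity
            nlinarith
          · rw [hcne m hm, Function.update_of_ne hm]
            exact S.size m
        · intro y hy
          have h1 := S.confined y (fun i hi' hm => by
            have := hy i (by omega) (by rw [hXg i hi']; exact hm)
            rw [hXg i hi', hgf i hi'] at this
            exact ⟨this.1, fun h => this.2 (by omega)⟩)
          refine ⟨h1.1, ?_⟩
          by_cases hm : ⌊2 * y⌋ = ⌊2 * x⌋
          · rw [hm, Function.update_self]
            have := (hy t (by omega) (by rw [← hx, hm])).2 hgt.le
            rw [← hx] at this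
            linarith
          · rw [Function.update_of_ne hm]; exact h1.2
      -- The right part is the smaller one: continue with indices smaller than `c`.
      · refine ⟨g, lo, c, Function.update p ⌊2 * x⌋ (x + w), q, by omega, hpos', hinj, ?_, ?_,
          hcount, ?_⟩
        · intro i hi'
          rcases Nat.lt_succ_iff_lt_or_eq.1 hi' with h | rfl
          · rw [hgf i h]
            rcases S.outside i h with h' | h' <;> omega
          · omega
        · intro m
          by_cases hm : m = ⌊2 * x⌋
          · rw [hm, hcself, Function.update_self, pow_succ]
            refine le_trans ?_ (S.size ⌊2 * x⌋)
            have : (0 : ℝ) < 2 ^ blockCount (X f) t ⌊2 * x⌋ := by positivity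
            nlinarith
          · rw [hcne m hm, Function.update_of_ne hm]
            exact S.size m
        · intro y hy
          have h1 := S.confined y (fun i hi' hm => by
            have := hy i (by omega) (by rw [hXg i hi']; exact hm)
            rw [hXg i hi', hgf i hi'] at this
            exact ⟨fun h => this.1 (by omega), this.2⟩)
          refine ⟨?_, h1.2⟩
          by_cases hm : ⌊2 * y⌋ = ⌊2 * x⌋
          · rw [hm, Function.update_self]
            have := (hy t (by omega) (by rw [← hx, hm])).1 hgt.ge
            rw [← hx] at this
            linarith
          · rw [Function.update_of_ne hm]; exact h1.1
  obtain ⟨f, lo, hi, p, q, S⟩ := main n le_rfl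
  exact ⟨f, S.pos, S.inj, S.count⟩

/-! ### Geometry of translated L-shapes -/

lemma mem_translate {v z : ℝ × ℝ} {L : LShape} :
    z ∈ planeTranslate v L.toSet ↔
      (v.1 ≤ z.1 ∧ v.2 ≤ z.2) ∧ ((z.1 ≤ v.1 + L.lx ∧ z.2 ≤ v.2 + L.wy) ∨
        (z.1 ≤ v.1 + L.wx ∧ z.2 ≤ v.2 + L.ly)) := by
  have h : z ∈ planeTranslate v L.toSet ↔ z - v ∈ L.toSet := by
    unfold planeTranslate
    constructor
    · rintro ⟨u, hu, rfl⟩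
      simpa using hu
    · intro hz
      exact ⟨z - v, hz, by simp⟩
  rw [h]
  simp only [LShape.toSet, Set.mem_union, Set.mem_Icc, Prod.le_def, Prod.fst_sub, Prod.snd_sub,
    sub_nonneg, sub_le_iff_le_add']
  tauto

lemma Ioo_prod_subset_interior {S : Set (ℝ × ℝ)} {a b c d : ℝ}
    (h : ∀ z : ℝ × ℝ, a < z.1 → z.1 < b → c < z.2 → z.2 < d → z ∈ S) :
    Set.Ioo a b ×ˢ Set.Ioo c d ⊆ interior S := by
  apply interior_maximal
  · rintro z ⟨⟨h1, h2⟩, h3, h4⟩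
    exact h z h1 h2 h3 h4
  · exact isOpen_Ioo.prod isOpen_Ioo

lemma horizontal_arm_subset (v : ℝ × ℝ) (L : LShape) :
    Set.Ioo v.1 (v.1 + L.lx) ×ˢ Set.Ioo v.2 (v.2 + L.wy) ⊆
      interior (planeTranslate v L.toSet) :=
  Ioo_prod_subset_interior fun _ h1 h2 h3 h4 =>
    mem_translate.2 ⟨⟨h1.le, h3.le⟩, Or.inl ⟨h2.le, h4.le⟩⟩

lemma vertical_arm_subset (v : ℝ × ℝ) (L : LShape) :
    Set.Ioo v.1 (v.1 + L.wx) ×ˢ Set.Ioo v.2 (v.2 + L.ly) ⊆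
      interior (planeTranslate v L.toSet) :=
  Ioo_prod_subset_interior fun _ h1 h2 h3 h4 =>
    mem_translate.2 ⟨⟨h1.le, h3.le⟩, Or.inr ⟨h2.le, h4.le⟩⟩

lemma exists_mem_Ioo_inter {a b c d : ℝ} (hab : a < b) (hcd : c < d) (had : a < d) (hcb : c < b) :
    ∃ z, z ∈ Set.Ioo a b ∧ z ∈ Set.Ioo c d := by
  obtain ⟨z, h1, h2⟩ := exists_between
    (show max a c < min b d from max_lt (lt_min hab had) (lt_min hcb hcd))
  rw [max_lt_iff] at h1
  rw [lt_min_iff] at h2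
  exact ⟨z, ⟨h1.1, h2.1⟩, h1.2, h2.2⟩

lemma not_disjoint_of_boxes {S T : Set (ℝ × ℝ)} {a b c d a' b' c' d' : ℝ}
    (hS : Set.Ioo a b ×ˢ Set.Ioo c d ⊆ S) (hT : Set.Ioo a' b' ×ˢ Set.Ioo c' d' ⊆ T)
    (h1 : a < b) (h2 : a' < b') (h3 : a < b') (h4 : a' < b)
    (h5 : c < d) (h6 : c' < d') (h7 : c < d') (h8 : c' < d) : ¬ Disjoint S T := by
  obtain ⟨x, hx, hx'⟩ := exists_mem_Ioo_inter h1 h2 h3 h4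
  obtain ⟨y, hy, hy'⟩ := exists_mem_Ioo_inter h5 h6 h7 h8
  exact Set.not_disjoint_iff.2 ⟨(x, y), hS ⟨hx, hy⟩, hT ⟨hx', hy'⟩⟩

lemma Lfam_valid (n i : ℕ) (hn : 1 ≤ n) : (Lfam n i).IsValid := by
  have hn' : (1 : ℝ) ≤ n := by exact_mod_cast hn
  have h1 : 1 / (2 * (n : ℝ)) ≤ 1 / 2 := by
    apply one_div_le_one_div_of_le <;> linarith
  have h2 : (0 : ℝ) ≤ 1 / (2 * n) := by positivity
  have h3 : (0 : ℝ) ≤ 1 / 2 ^ (i + 1) := by positivity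
  have h4 : (1 : ℝ) / 2 ^ (i + 1) ≤ 1 / 2 := by
    apply one_div_le_one_div_of_le (by norm_num)
    exact le_self_pow₀ (by norm_num) (by omega)
  refine ⟨h2, ?_, ?_, h3, ?_, ?_⟩ <;> simp only [Lfam] <;> linarith

lemma Lfam_mem_strip {n i : ℕ} (hn : 1 ≤ n) {v : ℝ × ℝ}
    (h : planeTranslate v (Lfam n i).toSet ⊆ strip) :
    0 ≤ v.1 ∧ 0 ≤ v.2 ∧ v.2 ≤ 1 / 2 ^ (i + 1) := by
  obtain ⟨h1, h2, h3, h4, h5, h6⟩ := Lfam_valid n i hn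
  have ha : v ∈ strip := h (mem_translate.2 ⟨⟨le_rfl, le_rfl⟩, Or.inl ⟨by linarith, by linarith⟩⟩)
  have hb : (v.1, v.2 + (Lfam n i).ly) ∈ strip :=
    h (mem_translate.2 ⟨⟨le_rfl, by simp; linarith⟩, Or.inr ⟨by simp; linarith, le_rfl⟩⟩)
  obtain ⟨h7, h8, -⟩ := ha
  obtain ⟨-, -, h9⟩ := hb
  refine ⟨h7, h8, ?_⟩
  simp only [Lfam] at h9
  linarith

/-- In the strip, an item of smaller index whose reference point is at most `1/2` to the left (which
includes every item of the same block) in fact lies to the right, by at least the width of a vertical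
arm. -/
lemma placement_separated {n a b : ℕ} (hn : 1 ≤ n) (hab : b < a) {u v : ℝ × ℝ}
    (hu : planeTranslate u (Lfam n a).toSet ⊆ strip)
    (hv : planeTranslate v (Lfam n b).toSet ⊆ strip)
    (hd : Disjoint (interior (planeTranslate u (Lfam n a).toSet))
      (interior (planeTranslate v (Lfam n b).toSet)))
    (huv : u.1 - v.1 ≤ 1 / 2) : u.1 + 1 / (2 * n) ≤ v.1 := by
  obtain ⟨-, hu2, hu3⟩ := Lfam_mem_strip hn hu
  obtain ⟨-, hv2, hv3⟩ := Lfam_mem_strip hn hv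
  have hn' : (0 : ℝ) < n := by exact_mod_cast hn
  have hw : (0 : ℝ) < 1 / (2 * n) := by positivity
  have hb : (1 : ℝ) / 2 ^ (b + 1) ≤ 1 / 2 := by
    apply one_div_le_one_div_of_le (by norm_num)
    exact le_self_pow₀ (by norm_num) (by omega)
  have hba : (1 : ℝ) / 2 ^ (a + 1) ≤ 1 / 2 ^ (b + 1) / 2 := by
    rw [div_div, ← pow_succ]
    apply one_div_le_one_div_of_le (by positivity)
    exact pow_le_pow_right₀ (by norm_num) (by omega)
  have ha0 : (0 : ℝ) < 1 / 2 ^ (a + 1) := by positivity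
  by_contra! hlt
  by_cases hleft : v.1 + 1 / (2 * n) ≤ u.1
  -- The vertical arm of the item at `u` crosses the horizontal arm of the item at `v`.
  · refine not_disjoint_of_boxes (vertical_arm_subset u (Lfam n a))
      (horizontal_arm_subset v (Lfam n b)) ?_ ?_ ?_ ?_ ?_ ?_ ?_ ?_ hd <;>
      simp only [Lfam] <;> linarith
  -- The two vertical arms overlap.
  · push Not at hleft
    refine not_disjoint_of_boxes (vertical_arm_subset u (Lfam n a))
      (vertical_arm_subset v (Lfam n b)) ?_ ?_ ?_ ?_ ?_ ?_ ?_ ?_ hd <;>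
      simp only [Lfam] <;> linarith

/-! ### The offline packing -/

/-- Nested L-shapes: if the second corner is to the right of the first vertical arm and above the
first horizontal arm, then the interiors are disjoint. -/
lemma disjoint_of_nested {u v : ℝ × ℝ} {K L : LShape}
    (h1 : u.1 + K.wx ≤ v.1) (h2 : u.2 + K.wy ≤ v.2) :
    Disjoint (interior (planeTranslate u K.toSet)) (interior (planeTranslate v L.toSet)) := by
  rw [Set.disjoint_left]
  intro z hz hz'
  have h3 : interior (planeTranslate v L.toSet) ⊆ Set.Ioi v.1 ×ˢ Set.Ioi v.2 := by
    rw [← interior_Ici, ← interior_Ici, ← interior_prod_eq]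
    apply interior_mono
    intro y hy
    exact (mem_translate.1 hy).1
  obtain ⟨h4, h5⟩ := h3 hz'
  obtain ⟨-, h | h⟩ := mem_translate.1 (interior_subset hz)
  · exact absurd h.2 (not_le.2 (lt_of_le_of_lt h2 h5))
  · exact absurd h.1 (not_le.2 (lt_of_le_of_lt h1 h4))

lemma sum_Ioc_half (a N : ℕ) (h : a ≤ N) :
    ∑ k ∈ Finset.Ioc a N, (1 : ℝ) / 2 ^ (k + 1) = 1 / 2 ^ (a + 1) - 1 / 2 ^ (N + 1) := by
  induction N, h using Nat.le_induction with
  | base => simp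
  | succ N h ih =>
    rw [← Finset.insert_Ioc_right_eq_Ioc_add_one h, Finset.sum_insert (by simp), ih]
    have : (2 : ℝ) ^ N ≠ 0 := by positivity
    field_simp
    ring

lemma sum_larger_index_le {n : ℕ} (idx : Fin n → ℕ) (hinj : Function.Injective idx) (i : Fin n) :
    ∑ k with idx i < idx k, (1 : ℝ) / 2 ^ (idx k + 1) ≤ 1 / 2 ^ (idx i + 1) := by
  rw [← Finset.sum_image (f := fun k => (1 : ℝ) / 2 ^ (k + 1)) (g := idx) hinj.injOn]
  let N := Finset.univ.sup idx
  have hN : ∀ k, idx k ≤ N := fun k => Finset.le_sup (Finset.mem_univ k)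
  calc _ ≤ ∑ k ∈ Finset.Ioc (idx i) N, (1 : ℝ) / 2 ^ (k + 1) := by
        apply Finset.sum_le_sum_of_subset_of_nonneg
        · intro k hk
          simp only [Finset.mem_image, Finset.mem_filter, Finset.mem_univ, true_and] at hk
          obtain ⟨j, hj, rfl⟩ := hk
          exact Finset.mem_Ioc.2 ⟨hj, hN j⟩
        · intros
          positivity
    _ ≤ _ := by
        rw [sum_Ioc_half _ _ (hN i)]
        have : (0 : ℝ) ≤ 1 / 2 ^ (N + 1) := by positivity
        linarith

lemma offline_packing {n : ℕ} (hn : 1 ≤ n) (idx : Fin n → ℕ) (hinj : Function.Injective idx) :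
    ∃ v : Fin n → ℝ × ℝ,
      (∀ i, planeTranslate (v i) (Lfam n (idx i)).toSet ⊆ unitBin) ∧
      ∀ i j, i ≠ j →
        Disjoint (interior (planeTranslate (v i) (Lfam n (idx i)).toSet))
                 (interior (planeTranslate (v j) (Lfam n (idx j)).toSet)) := by
  have hn' : (0 : ℝ) < n := by exact_mod_cast hn
  let T : Fin n → Finset (Fin n) := fun i => Finset.univ.filter fun k => idx i < idx k
  let v : Fin n → ℝ × ℝ := fun i =>
    ((T i).card * (1 / (2 * n)), ∑ k ∈ T i, (1 : ℝ) / 2 ^ (idx k + 1))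
  have hnest : ∀ i j, idx j < idx i →
      Disjoint (interior (planeTranslate (v i) (Lfam n (idx i)).toSet))
        (interior (planeTranslate (v j) (Lfam n (idx j)).toSet)) := by
    intro i j hij
    have hnot : i ∉ T i := by simp [T]
    have hsub : insert i (T i) ⊆ T j := by
      intro k hk
      simp only [T, Finset.mem_insert, Finset.mem_filter, Finset.mem_univ, true_and] at hk ⊢
      rcases hk with rfl | hk <;> omega
    apply disjoint_of_nested
    · have h1 := Finset.card_le_card hsub
      rw [Finset.card_insert_of_notMem hnot] at h1
      have h2 : ((T i).card : ℝ) + 1 ≤ (T j).card := by exact_mod_cast h1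
      have h3 : (0 : ℝ) ≤ 1 / (2 * n) := by positivity
      simp only [v, Lfam]
      nlinarith
    · have h1 : ∑ k ∈ insert i (T i), (1 : ℝ) / 2 ^ (idx k + 1) ≤
          ∑ k ∈ T j, (1 : ℝ) / 2 ^ (idx k + 1) :=
        Finset.sum_le_sum_of_subset_of_nonneg hsub fun _ _ _ => by positivity
      rw [Finset.sum_insert hnot] at h1
      simp only [v, Lfam]
      linarith
  refine ⟨v, ?_, ?_⟩
  · intro i z hz
    have hx0 : 0 ≤ (v i).1 := by simp only [v]; positivity
    have hy0 : 0 ≤ (v i).2 := by simp only [v]; positivity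
    have hy1 : (v i).2 ≤ 1 / 2 ^ (idx i + 1) := sum_larger_index_le idx hinj i
    have hcard : (T i).card + 1 ≤ n := by
      have h1 : i ∉ T i := by simp [T]
      have h2 := Finset.card_lt_univ_of_notMem h1
      rw [Fintype.card_fin] at h2
      omega
    have hx1 : (v i).1 + (1 / 2 + 1 / (2 * n)) ≤ 1 := by
      have h1 : ((T i).card : ℝ) + 1 ≤ n := by exact_mod_cast hcard
      have h2 : ((T i).card + 1 : ℝ) * (1 / (2 * n)) ≤ n * (1 / (2 * n)) := by gcongr
      have h3 : (n : ℝ) * (1 / (2 * n)) = 1 / 2 := by field_simp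
      simp only [v]
      linarith
    have hb : (1 : ℝ) / 2 ^ (idx i + 1) ≤ 1 / 2 := by
      apply one_div_le_one_div_of_le (by norm_num)
      exact le_self_pow₀ (by norm_num) (by omega)
    obtain ⟨⟨h1, h2⟩, h | h⟩ := mem_translate.1 hz <;> simp only [Lfam] at h <;>
      refine ⟨⟨by simp; linarith, by simp; linarith⟩, by simp; linarith, by simp; linarith⟩
  · intro i j hij
    rcases lt_or_gt_of_ne (fun h => hij (hinj h)) with h | h
    · exact (hnest j i h).symm
    · exact hnest i j h

/-! ### Numerical estimates -/

/-- Passing from `log₂(n+2)` to `log₂(n+1)` costs at most `2`. -/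
lemma div_logb_le {n : ℕ} (hn : 2 ≤ n) {W : ℝ} (h : (n : ℝ) ≤ Real.logb 2 (n + 2) * (2 * W)) :
    ((n : ℝ) / Real.logb 2 (n + 1) - 2) / 2 ≤ W := by
  have hn' : (2 : ℝ) ≤ n := by exact_mod_cast hn
  set a := Real.logb 2 (n + 1) with ha
  set b := Real.logb 2 (n + 2) with hb
  have ha1 : 1 ≤ a := by
    rw [ha, Real.le_logb_iff_rpow_le (by norm_num) (by linarith), Real.rpow_one]
    linarith
  have hab : a ≤ b := Real.logb_le_logb_of_le (by norm_num) (by linarith) (by linarith)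
  have hdiff : n * (b - a) ≤ 2 := by
    have hlog2 : (1 / 2 : ℝ) < Real.log 2 := by linarith [Real.log_two_gt_d9]
    have h1 : Real.log ((n + 2) / (n + 1)) ≤ 1 / (n + 1) := by
      have := Real.log_le_sub_one_of_pos (show (0 : ℝ) < (n + 2) / (n + 1) by positivity)
      refine this.trans (le_of_eq ?_)
      field_simp
      ring
    have h2 : (b - a) * Real.log 2 = Real.log ((n + 2) / (n + 1)) := by
      rw [ha, hb, Real.log_div (by positivity) (by positivity), Real.logb, Real.logb]
      field_simp
    have h3 : (n : ℝ) * (1 / (n + 1)) ≤ 1 := by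
      rw [mul_one_div, div_le_one (by positivity)]
      linarith
    have h4 : n * (b - a) * Real.log 2 ≤ 1 := by
      rw [mul_assoc, h2]
      exact (mul_le_mul_of_nonneg_left h1 (by linarith)).trans h3
    have h5 : 0 ≤ n * (b - a) := mul_nonneg (by linarith) (by linarith)
    nlinarith
  have hb0 : 0 < b := by linarith
  have ha0 : 0 < a := by linarith
  have h1 : (n : ℝ) / b ≤ 2 * W := by
    rw [div_le_iff₀ hb0]
    linarith
  have h2 : (n : ℝ) / a ≤ n / b + 2 := by
    rw [div_add' _ _ _ hb0.ne', div_le_div_iff₀ ha0 hb0]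
    have : 1 ≤ b * a := by nlinarith
    nlinarith
  linarith

/-- Items with positions in `[0, R]` and at most `k` of them per block, `2^k ≤ n + 2`, force `R` to be
large. -/
lemma card_le_of_blockCount {n : ℕ} {x : ℕ → ℝ} {R : ℝ} (hR : 0 ≤ R) (h0 : ∀ i < n, 0 ≤ x i)
    (hxR : ∀ i < n, x i ≤ R) (hc : ∀ m, 2 ^ blockCount x n m ≤ n + 2) :
    (n : ℝ) ≤ Real.logb 2 (n + 2) * (2 * R + 1) := by
  have h1 : n ≤ Nat.log 2 (n + 2) * (Finset.Icc (0 : ℤ) ⌊2 * R⌋).card := by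
    have := Finset.card_le_mul_card_image_of_maps_to (s := Finset.range n)
      (t := Finset.Icc (0 : ℤ) ⌊2 * R⌋) (f := fun i => ⌊2 * x i⌋) (fun i hi => ?_)
      (Nat.log 2 (n + 2)) (fun m _ => ?_)
    · simpa using this
    · have hi' := Finset.mem_range.1 hi
      have := h0 i hi'
      have := hxR i hi'
      exact Finset.mem_Icc.2 ⟨Int.floor_nonneg.2 (by linarith), Int.floor_le_floor (by linarith)⟩
    · exact Nat.le_log_of_pow_le (by norm_num) (hc m)
  have h2 : ((Finset.Icc (0 : ℤ) ⌊2 * R⌋).card : ℝ) ≤ 2 * R + 1 := by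
    have hf : 0 ≤ ⌊2 * R⌋ := Int.floor_nonneg.2 (by linarith)
    have h3 : ((Finset.Icc (0 : ℤ) ⌊2 * R⌋).card : ℤ) = ⌊2 * R⌋ + 1 := by
      rw [Int.card_Icc]
      omega
    have h4 : ((Finset.Icc (0 : ℤ) ⌊2 * R⌋).card : ℝ) = ⌊2 * R⌋ + 1 := by exact_mod_cast h3
    rw [h4]
    linarith [Int.floor_le (2 * R)]
  have h3 : (Nat.log 2 (n + 2) : ℝ) ≤ Real.logb 2 (n + 2) := by
    have := Real.natLog_le_logb (n + 2) 2
    push_cast at this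
    exact this
  calc (n : ℝ) ≤ (Nat.log 2 (n + 2) : ℝ) * (Finset.Icc (0 : ℤ) ⌊2 * R⌋).card := by exact_mod_cast h1
    _ ≤ _ := mul_le_mul h3 h2 (Nat.cast_nonneg _) ((Nat.cast_nonneg _).trans h3)

/-! ### The lower bound -/

/-- The translation chosen by `A` for the `i`-th item when the items are `Lfam n (f 0)`,
`Lfam n (f 1)`, and so on. -/
noncomputable def onlinePos (A : List LShape → ℝ × ℝ) (n : ℕ) (f : ℕ → ℕ) (i : ℕ) : ℝ × ℝ :=
  A ((List.range (i + 1)).map fun j => Lfam n (f j))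

lemma onlinePos_packs {A : List LShape → ℝ × ℝ}
    (hA : ∀ l : List LShape, (∀ L ∈ l, L.IsValid) → OnlineStripPacks A l)
    {n : ℕ} (hn : 1 ≤ n) (f : ℕ → ℕ) :
    (∀ i, planeTranslate (onlinePos A n f i) (Lfam n (f i)).toSet ⊆ strip) ∧
    ∀ i j, i ≠ j → Disjoint (interior (planeTranslate (onlinePos A n f i) (Lfam n (f i)).toSet))
      (interior (planeTranslate (onlinePos A n f j) (Lfam n (f j)).toSet)) := by
  have key : ∀ N, OnlineStripPacks A ((List.range N).map fun j => Lfam n (f j)) := by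
    intro N
    apply hA
    intro L hL
    obtain ⟨j, -, rfl⟩ := List.mem_map.1 hL
    exact Lfam_valid n _ hn
  have hpos : ∀ N, ∀ i : Fin ((List.range N).map fun j => Lfam n (f j)).length,
      stripPlaceOf A _ i = onlinePos A n f i.1 := by
    intro N i
    have hi : i.1 < N := by simpa using i.2
    simp only [stripPlaceOf, onlinePos]
    rw [← List.map_take, List.take_range, min_eq_left (by omega)]
  constructor
  · intro i
    have h := (key (i + 1)).1 ⟨i, by simp⟩
    rw [hpos] at h
    simpa using h
  · intro i j hij
    have h := (key (max i j + 1)).2 ⟨i, by simp⟩ ⟨j, by simp⟩ (by simpa using hij)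
    rw [hpos, hpos] at h
    simpa using h

/-- for every deterministic online strip-packing algorithm for L-shapes and
every `n ≥ 2`, there is a sequence of `n` pairwise distinct L-shapes from `𝓛^n` packable
offline into the unit square (optimal width ≤ 1), on which the width produced by the
algorithm (the supremum of covered x-coordinates) is at least `(n/log₂(n+1) − 2)/2`. -/
theorem stmt5 (A : List LShape → ℝ × ℝ)
    (hA : ∀ l : List LShape, (∀ L ∈ l, L.IsValid) → OnlineStripPacks A l)
    (n : ℕ) (hn : 2 ≤ n) :
    ∃ idx : Fin n → ℕ, Function.Injective idx ∧ (∀ i, 1 ≤ idx i) ∧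
      (∃ v : Fin n → ℝ × ℝ,
        (∀ i, planeTranslate (v i) (Lfam n (idx i)).toSet ⊆ unitBin) ∧
        ∀ i j, i ≠ j →
          Disjoint (interior (planeTranslate (v i) (Lfam n (idx i)).toSet))
                   (interior (planeTranslate (v j) (Lfam n (idx j)).toSet))) ∧
      ((n : ℝ) / Real.logb 2 (n + 1) - 2) / 2 ≤
        sSup ((fun p : ℝ × ℝ => p.1) ''
          ⋃ i : Fin n,
            planeTranslate (A ((List.ofFn fun j => Lfam n (idx j)).take (i.1 + 1)))
              (Lfam n (idx i)).toSet) := by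
  have hn1 : 1 ≤ n := by omega
  have hn' : (2 : ℝ) ≤ n := by exact_mod_cast hn
  obtain ⟨f, hpos, hinj, hcount⟩ := exists_adversarial_sequence n hn1 (1 / (2 * n)) rfl
    (fun f i => (onlinePos A n f i).1)
    (by
      intro f g i hfg
      simp only [onlinePos]
      congr 2
      apply List.map_congr_left
      intro j hj
      rw [hfg j (by have := List.mem_range.1 hj; omega)])
    (by
      intro f i j hij hm
      obtain ⟨h1, h2⟩ := onlinePos_packs hA hn1 f
      refine placement_separated hn1 hij (h1 i) (h1 j) (h2 i j ?_) ?_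
      · rintro rfl
        omega
      · have h3 := Int.abs_sub_lt_one_of_floor_eq_floor hm
        linarith [(abs_lt.1 h3).2])
  obtain ⟨hstrip, -⟩ := onlinePos_packs hA hn1 f
  have hidx : Function.Injective fun i : Fin n => f i := fun i j h =>
    Fin.ext (hinj i i.2 j j.2 h)
  refine ⟨fun i => f i, hidx, fun i => hpos i i.2, offline_packing hn1 _ hidx, ?_⟩
  have hplace : ∀ i : Fin n,
      A ((List.ofFn fun j : Fin n => Lfam n (f j)).take (i.1 + 1)) = onlinePos A n f i := by
    intro i
    have : (List.ofFn fun j : Fin n => Lfam n (f j)) =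
        (List.range n).map fun j => Lfam n (f j) := by
      apply List.ext_getElem <;> simp
    rw [this, ← List.map_take, List.take_range, min_eq_left (by omega), onlinePos]
  simp only [hplace]
  set S : Set ℝ := (fun p : ℝ × ℝ => p.1) '' ⋃ i : Fin n,
    planeTranslate (onlinePos A n f i) (Lfam n (f i)).toSet with hS
  have hbdd : BddAbove S := by
    apply IsCompact.bddAbove
    apply IsCompact.image _ continuous_fst
    apply isCompact_iUnion
    intro i
    exact (isCompact_Icc.union isCompact_Icc).image (continuous_id.add continuous_const)
  have hle : ∀ i < n, (onlinePos A n f i).1 + (1 / 2 + 1 / (2 * n)) ≤ sSup S := by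
    intro i hi
    apply le_csSup hbdd
    refine ⟨((onlinePos A n f i).1 + (1 / 2 + 1 / (2 * n)), (onlinePos A n f i).2), ?_, rfl⟩
    refine Set.mem_iUnion.2 ⟨⟨i, hi⟩, mem_translate.2 ⟨⟨?_, le_rfl⟩, Or.inl ⟨le_rfl, ?_⟩⟩⟩
    · have : (0 : ℝ) ≤ 1 / (2 * n) := by positivity
      simp only
      linarith
    · have : (0 : ℝ) ≤ 1 / 2 ^ (f i + 1) := by positivity
      simp only [Lfam]
      linarith
  have h0 : ∀ i, 0 ≤ (onlinePos A n f i).1 := fun i => (Lfam_mem_strip hn1 (hstrip i)).1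
  have hw : (0 : ℝ) ≤ 1 / (2 * n) := by positivity
  apply div_logb_le hn
  have := card_le_of_blockCount (R := sSup S - 1 / 2) (by linarith [hle 0 (by omega), h0 0])
    (fun i _ => h0 i) (fun i hi => by linarith [hle i hi]) hcount
  refine this.trans (le_of_eq ?_)
  ring
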